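/- arXiv:2310.04814 — 5 statements merged into one kernel-verified Lean document; each statement's English description precedes it below -/
import Mathlib

section
/- Subtraction Theorem: Let U and V be theories in the same signature and φ a sentence such that (U + φ, V + φ) is an acceptable pair (where U + φ denotes U ∪ {φ}). If (U + φ, V + φ) is computably inseparable, then so is (U + φ, V); that is, if (U + φ)_p and (V + φ)_r are computably inseparable, then (U + φ)_p and V_r are computably inseparable. -/
open FirstOrder FirstOrder.Language

namespace PourEl

/-! ## Recursion-theoretic notions -/

/-- The `i`-th computably enumerable subset of `ℕ` (the domain of the `i`-th
partial computable function). -/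
def WSet (i : ℕ) : Set ℕ :=
  {n | ((Denumerable.ofNat Nat.Partrec.Code i).eval n).Dom}

/-- A set of natural numbers is computably enumerable. -/
def CE (A : Set ℕ) : Prop := ∃ i, A = WSet i

/-- A set of natural numbers is computable. -/
def Comp (A : Set ℕ) : Prop := ComputablePred (· ∈ A)

/-- Disjoint sets `X`, `Y` are computably separable iff some computable set
contains `X` and is disjoint from `Y`. -/
def CompSeparable (X Y : Set ℕ) : Prop :=
  ∃ Z : Set ℕ, Comp Z ∧ X ⊆ Z ∧ Y ∩ Z = ∅

/-- Computable inseparability. -/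
def CompInseparable (X Y : Set ℕ) : Prop := ¬ CompSeparable X Y

/-- `Z` and `W` weakly biseparate `X` and `Y`. -/
def WeaklyBiseparate {α : Type*} (Z W X Y : Set α) : Prop :=
  X ⊆ Z ∧ Y ⊆ W ∧ Z ∩ Y = ∅ ∧ W ∩ X = ∅

/-- `Z` and `W` biseparate `X` and `Y`. -/
def Biseparate {α : Type*} (Z W X Y : Set α) : Prop :=
  WeaklyBiseparate Z W X Y ∧ Z ∩ W = ∅

/-! ## Logical notions -/

variable {L : FirstOrder.Language}

/-- Provability: `φ` is a first-order consequence of `U` (by Gödel completeness,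
semantic consequence). -/
def Prv (U : L.Theory) (φ : L.Sentence) : Prop := U ⊨ᵇ φ

/-- `U_p`: the set of theorems of `U`. -/
def Thms (U : L.Theory) : Set L.Sentence := {φ | Prv U φ}

/-- `U_r`: the set of refutable sentences of `U`. -/
def Refut (U : L.Theory) : Set L.Sentence := {φ | Prv U ∼φ}

/-- Consistency: `U ⊬ ⊥`. -/
def Consistent (U : L.Theory) : Prop := ¬ Prv U ⊥

/-- `φ` is independent of `U`: `U` proves neither `φ` nor `¬φ`. -/
def Independent (U : L.Theory) (φ : L.Sentence) : Prop := ¬ Prv U φ ∧ ¬ Prv U ∼φ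

/-- `U` is incomplete: some sentence is independent of it. -/
def Incomplete (U : L.Theory) : Prop := ∃ φ, Independent U φ

/-- Mono-consequence: `U ⊢_m φ` iff `ψ ⊢ φ` for some `ψ ∈ U`. -/
def MPrv (U : L.Theory) (φ : L.Sentence) : Prop := ∃ ψ ∈ U, Prv {ψ} φ

/-- `U_m`: the set of mono-theorems of `U`. -/
def MThms (U : L.Theory) : Set L.Sentence := {φ | MPrv U φ}

/-- `U_n`: the set of mono-refutable sentences of `U`. -/
def MRefut (U : L.Theory) : Set L.Sentence := {φ | MPrv U ∼φ}

/-- Mono-consistency: every member is consistent by itself. -/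
def MonoConsistent (U : L.Theory) : Prop := ∀ ψ ∈ U, Consistent ({ψ} : L.Theory)

/-- `Û`: the set of all non-empty finite conjunctions of elements of `U`. -/
def hat (U : L.Theory) : L.Theory :=
  {φ | ∃ (ψ : L.Sentence) (l : List L.Sentence),
    ψ ∈ U ∧ (∀ χ ∈ l, χ ∈ U) ∧ φ = l.foldl (· ⊓ ·) ψ}

/-- `U ⋓ V`. -/
def Cup (U V : L.Theory) : L.Theory :=
  {χ | ∃ φ ∈ U, ∃ ψ ∈ V, χ = φ ⊓ ψ}

/-- `U ⋐ V`: for every `φ ∈ U` and `ψ ∈ V` there is `ρ ∈ V` with `ρ ⊢ φ ∧ ψ`. -/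
def Ssub (U V : L.Theory) : Prop :=
  ∀ φ ∈ U, ∀ ψ ∈ V, ∃ ρ ∈ V, Prv {ρ} (φ ⊓ ψ)

/-! ## Gödel numbering -/

/-- A Gödel numbering of the sentences of a (countable) signature: a bijective
coding of sentences by natural numbers that is effective for the basic syntactic
operations, and for which the theorems of a c.e. theory can be effectively
enumerated from an index of the theory. -/
structure Numbering (L : FirstOrder.Language) where
  equiv : L.Sentence ≃ ℕ
  neg_comp : Computable fun n => equiv ∼(equiv.symm n)
  inf_comp : Computable₂ fun m n => equiv (equiv.symm m ⊓ equiv.symm n)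
  imp_comp : Computable₂ fun m n => equiv (equiv.symm m ⟹ equiv.symm n)
  iff_comp : Computable₂ fun m n => equiv (equiv.symm m ⇔ equiv.symm n)
  thmIdx : ℕ → ℕ
  thmIdx_comp : Computable thmIdx
  thmIdx_spec : ∀ i, WSet (thmIdx i) = equiv '' Thms (equiv.symm '' WSet i)

namespace Numbering

variable (g : Numbering L)

/-- The code of a sentence. -/
def code (φ : L.Sentence) : ℕ := g.equiv φ

/-- The set of codes of a set of sentences. -/
def codes (S : Set L.Sentence) : Set ℕ := g.equiv '' S

/-- The theory axiomatised by the `i`-th c.e. set (identified with a set of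
sentences via the numbering). -/
def thy (i : ℕ) : L.Theory := g.equiv.symm '' WSet i

/-- The theory `U` is computably enumerable (with respect to the numbering). -/
def CEThy (U : L.Theory) : Prop := CE (g.codes U)

end Numbering


/-- **Subtraction Theorem.** If `(U + φ, V + φ)` is an acceptable
pair and is computably inseparable, then so is `(U + φ, V)`. -/
theorem statement3 {L : FirstOrder.Language} (g : Numbering L) (U V : L.Theory)
    (φ : L.Sentence)
    (hacc : Consistent ((U ∪ {φ}) ∪ (V ∪ {φ})))
    (h : CompInseparable (g.codes (Thms (U ∪ {φ}))) (g.codes (Refut (V ∪ {φ})))) :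
    CompInseparable (g.codes (Thms (U ∪ {φ}))) (g.codes (Refut V)) := by
  rintro ⟨Z, hZ, hX, hY⟩
  apply h
  refine ⟨{n | g.equiv (φ ⊓ g.equiv.symm n) ∈ Z}, ?_, ?_, ?_⟩
  · have hf : Computable fun n => g.equiv (φ ⊓ g.equiv.symm n) := by
      have := g.inf_comp.comp (Computable.const (g.equiv φ)) Computable.id
      simpa using this
    obtain ⟨f, hfc, hfe⟩ := ComputablePred.computable_iff.1 hZ
    refine ComputablePred.computable_iff.2
      ⟨fun n => f (g.equiv (φ ⊓ g.equiv.symm n)), hfc.comp hf, ?_⟩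
    funext n
    exact congrFun hfe (g.equiv (φ ⊓ g.equiv.symm n))
  · rintro _ ⟨ψ, hψ, rfl⟩
    apply hX
    refine ⟨φ ⊓ ψ, ?_, by simp⟩
    change (U ∪ {φ}) ⊨ᵇ ψ at hψ
    change (U ∪ {φ}) ⊨ᵇ (φ ⊓ ψ)
    rw [Theory.models_sentence_iff] at hψ ⊢
    intro M
    have h1 : M ⊨ φ := Theory.realize_sentence_of_mem (U ∪ {φ}) (by simp)
    exact Formula.realize_inf.2 ⟨h1, hψ M⟩
  · rw [Set.eq_empty_iff_forall_notMem]
    rintro _ ⟨⟨ψ, hψ, rfl⟩, hz⟩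
    have hz' : g.equiv (φ ⊓ ψ) ∈ Z := by simpa using hz
    refine (Set.eq_empty_iff_forall_notMem.1 hY) (g.equiv (φ ⊓ ψ)) ⟨⟨φ ⊓ ψ, ?_, rfl⟩, hz'⟩
    change (V ∪ {φ}) ⊨ᵇ ∼ψ at hψ
    change V ⊨ᵇ ∼(φ ⊓ ψ)
    rw [Theory.models_sentence_iff] at hψ ⊢
    intro M
    refine (Sentence.realize_not M).2 fun hc => ?_
    obtain ⟨h1, h2⟩ := Formula.realize_inf.1 hc
    have hm : M ⊨ (V ∪ {φ} : L.Theory) :=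
      Theory.model_union_iff.2 ⟨M.is_model, Theory.model_singleton_iff.2 h1⟩
    exact (Sentence.realize_not M).1 (hψ (Theory.ModelType.of (V ∪ {φ}) M)) h2

end PourEl
end

section
/- Let U be a consistent c.e. theory and 𝒳 a set of sentences. Then U is effectively 𝒳-inseparable if and only if U is effectively uniformly essentially 𝒳-incomplete. -/
open FirstOrder FirstOrder.Language

namespace PourEl

/-! ## Logical notions -/

variable {L : FirstOrder.Language}

/-- `U` is effectively `X`-inseparable: a partial computable function uniformly
produces, from any pair of c.e. sets weakly biseparating `U_p` and `U_r`, a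
sentence in `X` lying outside both. -/
def EffXInseparable (g : Numbering L) (U : L.Theory) (X : Set L.Sentence) : Prop :=
  ∃ Φ : ℕ → ℕ →. ℕ, Partrec₂ Φ ∧ ∀ i j,
    WeaklyBiseparate (WSet i) (WSet j) (g.codes (Thms U)) (g.codes (Refut U)) →
    ∃ n ∈ Φ i j, n ∈ g.codes X ∧ n ∉ WSet i ∪ WSet j

/-- The `i`-th theory in the computable sequence of c.e. theories with index `j`
(a sequence is given by a c.e. relation, coded via pairing). -/
def Numbering.seqThy (g : Numbering L) (j i : ℕ) : L.Theory :=
  {φ | Nat.pair i (g.code φ) ∈ WSet j}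

/-- `U` is effectively uniformly essentially `X`-incomplete. -/
def EffUnifEssXIncomplete (g : Numbering L) (U : L.Theory) (X : Set L.Sentence) : Prop :=
  ∃ Φ : ℕ →. ℕ, Partrec Φ ∧ ∀ j,
    (∀ i, Consistent (g.seqThy j i) ∧ Thms U ⊆ Thms (g.seqThy j i)) →
    ∃ n ∈ Φ j, ∃ φ : L.Sentence, g.code φ = n ∧ φ ∈ X ∧
      ∀ i, Independent (g.seqThy j i) φ

/-! ## Helper: Σ₁ predicates -/

/-- `p` is the projection of a computable predicate. -/
def SR {α : Type*} [Primcodable α] (p : α → Prop) : Prop :=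
  ∃ q : α → ℕ → Bool, Computable₂ q ∧ ∀ a, p a ↔ ∃ k, q a k = true

section
variable {α β : Type*} [Primcodable α] [Primcodable β]

theorem SR.comp {p : α → Prop} (hp : SR p) {f : β → α} (hf : Computable f) :
    SR fun b => p (f b) := by
  obtain ⟨q, hq, h⟩ := hp
  exact ⟨fun b k => q (f b) k, hq.comp (hf.comp Computable.fst) Computable.snd, fun b => h _⟩

theorem SR.and {p r : α → Prop} (hp : SR p) (hr : SR r) : SR fun a => p a ∧ r a := by
  obtain ⟨q, hq, h⟩ := hp
  obtain ⟨q', hq', h'⟩ := hr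
  refine ⟨fun a k => q a k.unpair.1 && q' a k.unpair.2, ?_, fun a => ?_⟩
  · exact Primrec.and.to_comp.comp
      (hq.comp Computable.fst (Computable.fst.comp (Computable.unpair.comp Computable.snd)))
      (hq'.comp Computable.fst (Computable.snd.comp (Computable.unpair.comp Computable.snd)))
  · beta_reduce
    rw [h, h']
    constructor
    · rintro ⟨⟨k, hk⟩, l, hl⟩
      exact ⟨Nat.pair k l, by simp [hk, hl]⟩
    · rintro ⟨k, hk⟩
      rw [Bool.and_eq_true] at hk
      exact ⟨⟨_, hk.1⟩, _, hk.2⟩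

theorem SR.or {p r : α → Prop} (hp : SR p) (hr : SR r) : SR fun a => p a ∨ r a := by
  obtain ⟨q, hq, h⟩ := hp
  obtain ⟨q', hq', h'⟩ := hr
  refine ⟨fun a k => q a k || q' a k, Primrec.or.to_comp.comp hq hq', fun a => ?_⟩
  beta_reduce
  rw [h, h', ← exists_or]
  simp

theorem SR.ex {p : α → ℕ → Prop} (hp : SR fun x : α × ℕ => p x.1 x.2) :
    SR fun a => ∃ n, p a n := by
  obtain ⟨q, hq, h⟩ := hp
  refine ⟨fun a k => q (a, k.unpair.1) k.unpair.2, ?_, fun a => ?_⟩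
  · exact hq.comp (Computable.fst.pair
      (Computable.fst.comp (Computable.unpair.comp Computable.snd)))
      (Computable.snd.comp (Computable.unpair.comp Computable.snd))
  · constructor
    · rintro ⟨n, hn⟩
      obtain ⟨k, hk⟩ := (h (a, n)).1 hn
      exact ⟨Nat.pair n k, by simpa using hk⟩
    · rintro ⟨k, hk⟩
      exact ⟨_, (h (a, k.unpair.1)).2 ⟨_, hk⟩⟩

theorem SR.eq {f g : α → ℕ} (hf : Computable f) (hg : Computable g) :
    SR fun a => f a = g a := by
  refine ⟨fun a _ => decide (f a = g a), ?_, fun a => by simp⟩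
  have h : Computable₂ fun m n : ℕ => decide (m = n) := by
    have := (Primrec.eq (α := ℕ)).decide.to_comp
    exact this
  exact h.comp (hf.comp Computable.fst) (hg.comp Computable.fst)

theorem SR.mem {f g : α → ℕ} (hf : Computable f) (hg : Computable g) :
    SR fun a => f a ∈ WSet (g a) := by
  refine ⟨fun a k => (Nat.Partrec.Code.evaln k
    (Denumerable.ofNat Nat.Partrec.Code (g a)) (f a)).isSome, ?_, fun a => ?_⟩
  · exact Primrec.option_isSome.to_comp.comp (Nat.Partrec.Code.primrec_evaln.to_comp.comp
      ((Computable.snd.pair ((Computable.ofNat _).comp (hg.comp Computable.fst))).pair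
        (hf.comp Computable.fst)))
  · simp only [WSet, Set.mem_ofPred_eq, Part.dom_iff_mem, Nat.Partrec.Code.evaln_complete,
      Option.isSome_iff_exists, Option.mem_def]
    exact exists_comm

/-- The s-m-n theorem for Σ₁ predicates. -/
theorem SR.index {p : α → ℕ → Prop} (hp : SR fun x : α × ℕ => p x.1 x.2) :
    ∃ f : α → ℕ, Computable f ∧ ∀ a n, n ∈ WSet (f a) ↔ p a n := by
  obtain ⟨q, hq, h⟩ := hp
  have h1 : Partrec fun x : α × ℕ => Nat.rfind fun k => Part.some (q x k) :=
    Partrec.rfind hq.partrec₂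
  obtain ⟨c, hc⟩ := Nat.Partrec.Code.exists_code.1 h1
  refine ⟨fun a => Encodable.encode (Nat.Partrec.Code.curry c (Encodable.encode a)), ?_, ?_⟩
  · exact Computable.encode.comp (Nat.Partrec.Code.primrec₂_curry.to_comp.comp
      (Computable.const c) Computable.encode)
  · intro a n
    refine Iff.trans ?_ (h (a, n)).symm
    simp only [WSet, Set.mem_ofPred_eq, Denumerable.ofNat_encode, Nat.Partrec.Code.eval_curry, hc]
    have e : Nat.pair (Encodable.encode a) n = Encodable.encode (a, n) := rfl
    rw [e, Encodable.encodek]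
    simp only [Part.coe_some, Part.bind_some, Part.map_Dom]
    refine (Nat.rfind_dom (p := fun k => Part.some (q (a, n) k))).trans ?_
    constructor
    · rintro ⟨k, hk, _⟩
      exact ⟨k, (Part.mem_some_iff.1 hk).symm⟩
    · rintro ⟨k, hk⟩
      exact ⟨k, Part.mem_some_iff.2 hk.symm, fun _ => trivial⟩

end

/-! ## Helper: logic -/

theorem Prv.mono {U T : L.Theory} (h : U ⊆ T) {φ : L.Sentence} (hp : Prv U φ) : Prv T φ := by
  unfold Prv at *
  rw [Theory.models_sentence_iff] at *
  intro M
  exact hp ((M : Theory.ModelType T).subtheoryModel h)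

theorem Prv.of_mem {U : L.Theory} {φ : L.Sentence} (h : φ ∈ U) : Prv U φ :=
  Theory.models_sentence_of_mem h

theorem Prv.absurd {U : L.Theory} {φ : L.Sentence} (h : Prv U φ) (h' : Prv U ∼φ) : Prv U ⊥ := by
  unfold Prv at *
  rw [Theory.models_sentence_iff] at *
  intro M
  have h1 := h M
  have h2 := h' M
  simp only [Sentence.Realize, Formula.realize_not] at h1 h2
  exact (h2 h1).elim

theorem Prv.refute {U : L.Theory} {φ : L.Sentence} (h : Prv (U ∪ {φ}) ⊥) : Prv U ∼φ := by
  unfold Prv at *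
  rw [Theory.models_sentence_iff] at *
  intro M
  simp only [Sentence.Realize, Formula.realize_not]
  intro hφ
  have : (M : Type _) ⊨ (U ∪ {φ}) :=
    Theory.model_union_iff.2 ⟨M.is_model, Theory.model_singleton_iff.2 hφ⟩
  exact h (Theory.ModelType.of (U ∪ {φ}) M)

theorem Prv.prove {U : L.Theory} {φ : L.Sentence} (h : Prv (U ∪ {∼φ}) ⊥) : Prv U φ := by
  have h := Prv.refute h
  unfold Prv at *
  rw [Theory.models_sentence_iff] at *
  intro M
  have h1 := h M
  simpa only [Sentence.Realize, Formula.realize_not, not_not] using h1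

theorem mem_codes {g : Numbering L} {S : Set L.Sentence} {n : ℕ} :
    n ∈ g.codes S ↔ g.equiv.symm n ∈ S := by
  unfold Numbering.codes
  constructor
  · rintro ⟨x, hx, rfl⟩
    simpa using hx
  · intro h
    exact ⟨_, h, by simp⟩

theorem insep_to_incomplete (g : Numbering L) (U : L.Theory) (X : Set L.Sentence)
    (H : EffXInseparable g U X) : EffUnifEssXIncomplete g U X := by
  obtain ⟨Φ, hΦ, H⟩ := H
  obtain ⟨s, hs, hs'⟩ := SR.index (α := ℕ × ℕ) (p := fun a n => Nat.pair a.2 n ∈ WSet a.1)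
    (SR.mem (Primrec₂.natPair.to_comp.comp (Computable.snd.comp Computable.fst) Computable.snd)
      (Computable.fst.comp Computable.fst))
  have hthm : ∀ j i n, n ∈ WSet (g.thmIdx (s (j, i))) ↔ Prv (g.seqThy j i) (g.equiv.symm n) := by
    intro j i n
    have e : g.equiv.symm '' WSet (s (j, i)) = g.seqThy j i := by
      ext φ
      rw [Equiv.image_symm_eq_preimage]
      exact hs' (j, i) (g.equiv φ)
    rw [g.thmIdx_spec, e]
    exact mem_codes (S := Thms _)
  obtain ⟨a, ha, ha'⟩ := SR.index (α := ℕ)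
    (p := fun j n => ∃ i, n ∈ WSet (g.thmIdx (s (j, i))))
    (SR.ex (p := fun (x : ℕ × ℕ) i => x.2 ∈ WSet (g.thmIdx (s (x.1, i))))
      (SR.mem (Computable.snd.comp Computable.fst) (g.thmIdx_comp.comp (hs.comp
      ((Computable.fst.comp Computable.fst).pair Computable.snd)))))
  obtain ⟨b, hb, hb'⟩ := SR.index (α := ℕ)
    (p := fun j n => g.equiv ∼(g.equiv.symm n) ∈ WSet (a j))
    (SR.mem (g.neg_comp.comp Computable.snd) (ha.comp Computable.fst))
  have ha2 : ∀ j n, n ∈ WSet (a j) ↔ ∃ i, Prv (g.seqThy j i) (g.equiv.symm n) := by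
    intro j n
    rw [ha']
    simp only [hthm]
  have hb2 : ∀ j n, n ∈ WSet (b j) ↔ ∃ i, Prv (g.seqThy j i) ∼(g.equiv.symm n) := by
    intro j n
    rw [hb', ha2]
    simp only [Equiv.symm_apply_apply]
  refine ⟨fun j => Φ (a j) (b j), hΦ.comp ha hb, fun j hj => ?_⟩
  obtain ⟨n, hn, hX, hn'⟩ := H (a j) (b j) (by
    refine ⟨fun n hn => ?_, fun n hn => ?_, ?_, ?_⟩
    · exact (ha2 _ _).2 ⟨0, (hj 0).2 (mem_codes.1 hn)⟩
    · exact (hb2 _ _).2 ⟨0, (hj 0).2 (mem_codes.1 hn)⟩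
    · ext n
      simp only [Set.mem_inter_iff, Set.mem_empty_iff_false, iff_false, not_and]
      intro h1 h2
      obtain ⟨i, hi⟩ := (ha2 _ _).1 h1
      exact (hj i).1 (Prv.absurd hi ((hj i).2 (mem_codes.1 h2)))
    · ext n
      simp only [Set.mem_inter_iff, Set.mem_empty_iff_false, iff_false, not_and]
      intro h1 h2
      obtain ⟨i, hi⟩ := (hb2 _ _).1 h1
      exact (hj i).1 (Prv.absurd ((hj i).2 (mem_codes.1 h2)) hi))
  refine ⟨n, hn, g.equiv.symm n, by simp [Numbering.code], mem_codes.1 hX, fun i => ⟨?_, ?_⟩⟩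
  · exact fun h => hn' (Or.inl ((ha2 _ _).2 ⟨i, h⟩))
  · exact fun h => hn' (Or.inr ((hb2 _ _).2 ⟨i, h⟩))

theorem incomplete_to_insep (g : Numbering L) (U : L.Theory) (hU : g.CEThy U)
    (hcon : Consistent U) (X : Set L.Sentence)
    (H : EffUnifEssXIncomplete g U X) : EffXInseparable g U X := by
  obtain ⟨Φ, hΦ, H⟩ := H
  obtain ⟨u, hu⟩ := hU
  have cm : Computable fun x : (ℕ × ℕ) × ℕ => x.2.unpair.1 :=
    Computable.fst.comp (Computable.unpair.comp Computable.snd)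
  have cn : Computable fun x : (ℕ × ℕ) × ℕ => x.2.unpair.2 :=
    Computable.snd.comp (Computable.unpair.comp Computable.snd)
  have c2 : Computable fun n : ℕ => 2 * n :=
    (Primrec.nat_mul.comp (Primrec.const 2) Primrec.id).to_comp
  have c3 : Computable fun n : ℕ => 2 * n + 1 := Computable.succ.comp c2
  have h1 : SR fun x : (ℕ × ℕ) × ℕ =>
      x.2.unpair.2 ∈ WSet x.1.1 ∧ x.2.unpair.1 = 2 * x.2.unpair.2 :=
    (SR.mem cn (Computable.fst.comp Computable.fst)).and (SR.eq cm (c2.comp cn))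
  have h2 : SR fun x : (ℕ × ℕ) × ℕ =>
      ∃ k, k ∈ WSet x.1.2 ∧ x.2.unpair.1 = 2 * k + 1 ∧
        x.2.unpair.2 = g.equiv ∼(g.equiv.symm k) :=
    SR.ex (p := fun (x : (ℕ × ℕ) × ℕ) k => k ∈ WSet x.1.2 ∧ x.2.unpair.1 = 2 * k + 1 ∧
        x.2.unpair.2 = g.equiv ∼(g.equiv.symm k))
      ((SR.mem Computable.snd (Computable.snd.comp (Computable.fst.comp Computable.fst))).and
        ((SR.eq (cm.comp Computable.fst) (c3.comp Computable.snd)).and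
          (SR.eq (cn.comp Computable.fst) (g.neg_comp.comp Computable.snd))))
  have h0 : SR fun x : (ℕ × ℕ) × ℕ => x.2.unpair.2 ∈ WSet u :=
    SR.mem cn (Computable.const u)
  obtain ⟨f, hf, hf'⟩ := SR.index (α := ℕ × ℕ) (p := fun a x => x.unpair.2 ∈ WSet u ∨
    (x.unpair.2 ∈ WSet a.1 ∧ x.unpair.1 = 2 * x.unpair.2) ∨
    ∃ k, k ∈ WSet a.2 ∧ x.unpair.1 = 2 * k + 1 ∧
        x.unpair.2 = g.equiv ∼(g.equiv.symm k)) (h0.or (h1.or h2))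
  have key : ∀ i j m φ, φ ∈ g.seqThy (f (i, j)) m ↔ φ ∈ U ∨
      (g.equiv φ ∈ WSet i ∧ m = 2 * g.equiv φ) ∨
      ∃ k, k ∈ WSet j ∧ m = 2 * k + 1 ∧ φ = ∼(g.equiv.symm k) := by
    intro i j m φ
    unfold Numbering.seqThy Numbering.code
    rw [Set.mem_ofPred_eq, hf', ← hu, mem_codes]
    simp only [Nat.unpair_pair, Equiv.symm_apply_apply, EmbeddingLike.apply_eq_iff_eq]
  refine ⟨fun i j => Φ (f (i, j)), hΦ.comp hf, fun i j hij => ?_⟩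
  obtain ⟨hi, hj, hi', hj'⟩ := hij
  obtain ⟨n, hn, φ, rfl, hX, hind⟩ := H (f (i, j)) (by
    intro m
    refine ⟨?_, fun ψ hψ => Prv.mono (fun χ hχ => (key i j m χ).2 (Or.inl hχ)) hψ⟩
    intro hbot
    rcases Nat.even_or_odd' m with ⟨k, rfl | rfl⟩
    · by_cases hk : k ∈ WSet i
      · have hr : Prv U ∼(g.equiv.symm k) := by
          apply Prv.refute
          refine Prv.mono (fun χ hχ => ?_) hbot
          rcases (key _ _ _ _).1 hχ with h | ⟨_, h⟩ | ⟨l, _, h, _⟩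
          · exact Or.inl h
          · right
            have : k = g.equiv χ := by omega
            simp [this]
          · omega
        have : k ∈ WSet i ∩ g.codes (Refut U) := ⟨hk, mem_codes.2 hr⟩
        rw [hi'] at this
        exact this
      · refine hcon (Prv.mono (fun χ hχ => ?_) hbot)
        rcases (key _ _ _ _).1 hχ with h | ⟨h', h⟩ | ⟨l, _, h, _⟩
        · exact h
        · have : k = g.equiv χ := by omega
          exact absurd (this ▸ h') hk
        · omega
    · by_cases hk : k ∈ WSet j
      · have hr : Prv U (g.equiv.symm k) := by
          apply Prv.prove
          refine Prv.mono (fun χ hχ => ?_) hbot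
          rcases (key _ _ _ _).1 hχ with h | ⟨_, h⟩ | ⟨l, _, h, h'⟩
          · exact Or.inl h
          · omega
          · right
            have : k = l := by omega
            rw [this]
            exact h'
        have : k ∈ WSet j ∩ g.codes (Thms U) := ⟨hk, mem_codes.2 hr⟩
        rw [hj'] at this
        exact this
      · refine hcon (Prv.mono (fun χ hχ => ?_) hbot)
        rcases (key _ _ _ _).1 hχ with h | ⟨h', h⟩ | ⟨l, hl, h, _⟩
        · exact h
        · omega
        · have : k = l := by omega
          exact absurd (this ▸ hl) hk)
  refine ⟨_, hn, ⟨φ, hX, rfl⟩, ?_⟩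
  rintro (h | h)
  · exact (hind (2 * g.equiv φ)).1 (Prv.of_mem ((key _ _ _ _).2 (Or.inr (Or.inl ⟨h, rfl⟩))))
  · exact (hind (2 * g.equiv φ + 1)).2 (Prv.of_mem ((key _ _ _ _).2
      (Or.inr (Or.inr ⟨_, h, rfl, by simp [Numbering.code]⟩))))

/-- A consistent c.e. theory is effectively `X`-inseparable iff
it is effectively uniformly essentially `X`-incomplete. -/
theorem statement6 {L : FirstOrder.Language} (g : Numbering L) (U : L.Theory)
    (hU : g.CEThy U) (hcon : Consistent U) (X : Set L.Sentence) :
    EffXInseparable g U X ↔ EffUnifEssXIncomplete g U X := by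
  exact ⟨insep_to_incomplete g U X, incomplete_to_insep g U hU hcon X⟩

end PourEl
end

section
/- Pour-El's Theorem (strengthened): Let U be a consistent c.e. theory and ℱ a function from sets of sentences to sets of sentences. If U is effectively if-essentially ℱ-incomplete, then U is effectively ℱ(U)-inseparable; moreover, the witnessing function Ψ can be chosen total computable, with Ψ(i, j) ∈ ℱ(U) and Ψ(i, j) ∉ W_i ∪ W_j whenever W_i and W_j weakly biseparate U_p and U_r. -/
open FirstOrder FirstOrder.Language

namespace PourEl

/-! ## Logical notions -/

variable {L : FirstOrder.Language}

/-- `Φ` witnesses that `U` is effectively if-essentially `F`-incomplete: whenever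
`W i` is a consistent finite extension of `U` (as a set of axioms), `Φ i`
converges to (the code of) a sentence in `F (W i)` independent of `W i`. -/
def IfEssWitness (g : Numbering L) (U : L.Theory)
    (F : Set L.Sentence → Set L.Sentence) (Φ : ℕ →. ℕ) : Prop :=
  ∀ i, (∃ Γ : Finset L.Sentence, g.thy i = U ∪ (Γ : Set L.Sentence)) →
    Consistent (g.thy i) →
    ∃ n ∈ Φ i, ∃ φ : L.Sentence, g.code φ = n ∧ φ ∈ F (g.thy i) ∧ Independent (g.thy i) φ

/-- `U` is effectively if-essentially `F`-incomplete. -/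
def EffIfEssIncomplete (g : Numbering L) (U : L.Theory)
    (F : Set L.Sentence → Set L.Sentence) : Prop :=
  ∃ Φ : ℕ →. ℕ, Partrec Φ ∧ IfEssWitness g U F Φ

open Nat.Partrec (Code)
open Nat.Partrec.Code Denumerable Encodable

theorem partrec_W : Partrec₂ fun i n : ℕ => eval (ofNat Code i) n :=
  eval_part.comp ((Computable.ofNat Code).comp Computable.fst) Computable.snd

theorem partrec_guard : Partrec fun q : ℕ × ℕ => (if q.1 = q.2 then Part.some 0 else Part.none : Part ℕ) := by
  have h : Computable fun q : ℕ × ℕ => decide (q.1 = q.2) :=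
    (Primrec.eq (α := ℕ)).decide.to_comp
  refine (Partrec.cond h (Computable.const 0).partrec Partrec.none).of_eq ?_
  intro q
  by_cases hq : q.1 = q.2 <;> simp [hq]

/-- The recursion theorem with a parameter, in the shape needed below. -/
theorem param_rec (u : ℕ →. ℕ) (hu : Partrec u) (Φ : ℕ →. ℕ) (hΦ : Partrec Φ)
    (e : ℕ → ℕ →. ℕ) (he : Partrec₂ e) :
    ∃ k : ℕ → ℕ, Computable k ∧
      ∀ p n, n ∈ WSet (k p) ↔ ((u n).Dom ∨ ∃ x ∈ Φ (k p), n ∈ e p x) := by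
  let s : Code × ℕ → ℕ := fun a => encode (curry a.1 a.2.unpair.1)
  have hfst : Computable fun a : Code × ℕ => a.2.unpair.1 :=
    Computable.fst.comp (Computable.unpair.comp Computable.snd)
  have hsnd : Computable fun a : Code × ℕ => a.2.unpair.2 :=
    Computable.snd.comp (Computable.unpair.comp Computable.snd)
  have hs : Computable s :=
    Computable.encode.comp (primrec₂_curry.to_comp.comp Computable.fst hfst)
  have h1 : Partrec fun a : Code × ℕ => (Φ (s a)).bind fun x => e a.2.unpair.1 x :=
    (hΦ.comp hs).bind (he.comp (hfst.comp Computable.fst) Computable.snd).to₂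
  have h2 : Partrec fun a : Code × ℕ => ((Φ (s a)).bind fun x => e a.2.unpair.1 x).bind fun y =>
      (if y = a.2.unpair.2 then Part.some 0 else Part.none : Part ℕ) :=
    h1.bind (partrec_guard.comp (Computable.snd.pair (hsnd.comp Computable.fst))).to₂
  obtain ⟨f, hf, hf'⟩ := Partrec.merge' (hu.comp hsnd) h2
  obtain ⟨c, hc⟩ := fixed_point₂ (f := fun c m => f (c, m)) hf
  refine ⟨fun p => encode (curry c p),
    Computable.encode.comp (primrec₂_curry.to_comp.comp (Computable.const c) Computable.id), ?_⟩
  intro p n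
  have : n ∈ WSet (encode (curry c p)) ↔ (f (c, Nat.pair p n)).Dom := by
    simp only [WSet, Set.mem_setOf_eq, ofNat_encode, eval_curry]
    rw [hc]
  rw [this, (hf' _).2]
  simp only [s, Nat.unpair_pair]
  refine or_congr Iff.rfl ?_
  rw [Part.dom_iff_mem]
  simp only [Part.mem_bind_iff]
  constructor
  · rintro ⟨z, y, ⟨x, hx, hy⟩, hz⟩
    split_ifs at hz with h
    · exact ⟨x, hx, h ▸ hy⟩
    · exact absurd hz (Part.notMem_none _)
  · rintro ⟨x, hx, hy⟩
    exact ⟨0, n, ⟨x, hx, hy⟩, by simp⟩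

/-- Projection of a c.e. relation, as a partial computable function with value `0`. -/
theorem partrec_search (r : ℕ → ℕ →. ℕ) (hr : Partrec₂ r) :
    ∃ q : ℕ →. ℕ, Partrec q ∧ ∀ p, (q p).Dom ↔ ∃ n, (r p n).Dom := by
  obtain ⟨d, hd⟩ := exists_code.1 (Partrec.nat_iff.1 (Partrec₂.unpaired.2 hr))
  refine ⟨fun p => Nat.rfindOpt fun t => evaln t.unpair.1 d (Nat.pair p t.unpair.2), ?_, ?_⟩
  · apply Partrec.rfindOpt
    have ht : Computable fun a : ℕ × ℕ => a.2.unpair := Computable.unpair.comp Computable.snd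
    exact primrec_evaln.to_comp.comp
      (((Computable.fst.comp ht).pair (Computable.const d)).pair
        (Primrec₂.natPair.to_comp.comp Computable.fst (Computable.snd.comp ht)))
  · intro p
    rw [Nat.rfindOpt_dom]
    have key : ∀ n, (r p n).Dom ↔ ∃ k a, a ∈ evaln k d (Nat.pair p n) := by
      intro n
      have : r p n = eval d (Nat.pair p n) := by simp [hd]
      rw [this, Part.dom_iff_mem]
      simp only [evaln_complete]
      exact exists_comm
    simp only [key]
    constructor
    · rintro ⟨t, a, h⟩
      exact ⟨_, _, a, h⟩
    · rintro ⟨n, k, a, h⟩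
      exact ⟨Nat.pair k n, a, by simpa using h⟩

theorem prv_of_mem {L : FirstOrder.Language} {U : L.Theory} {φ : L.Sentence} (h : φ ∈ U) :
    Prv U φ := Theory.models_sentence_of_mem h

theorem consistent_add {L : FirstOrder.Language} {U : L.Theory} {φ : L.Sentence}
    (h : ¬ Prv U ∼φ) : Consistent (U ∪ {φ}) := by
  intro hb
  apply h
  unfold Prv at hb ⊢
  rw [Theory.models_sentence_iff] at hb ⊢
  intro M
  rw [Sentence.realize_not]
  intro hM
  have hm : (M : Type _) ⊨ U ∪ {φ} := by
    refine ⟨fun ψ hψ => ?_⟩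
    rcases hψ with hψ | hψ
    · exact Theory.realize_sentence_of_mem U hψ
    · rw [Set.mem_singleton_iff.1 hψ]; exact hM
  exact hb (Theory.ModelType.of (U ∪ {φ}) M)

theorem consistent_add_not {L : FirstOrder.Language} {U : L.Theory} {φ : L.Sentence}
    (h : ¬ Prv U φ) : Consistent (U ∪ {∼φ}) := by
  apply consistent_add
  intro hb
  apply h
  unfold Prv at hb ⊢
  rw [Theory.models_sentence_iff] at hb ⊢
  intro M
  have := hb M
  rwa [Sentence.realize_not, Sentence.realize_not, not_not] at this

/-- Core step: no separation condition other than disjointness is needed. -/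
theorem core {L : FirstOrder.Language} (g : Numbering L) (U : L.Theory)
    (hU : g.CEThy U) (hcon : Consistent U) (F : Set L.Sentence → Set L.Sentence)
    (Φ : ℕ →. ℕ) (hΦ : Partrec Φ) (hw : IfEssWitness g U F Φ) :
    ∃ Θ : ℕ →. ℕ, Partrec Θ ∧ ∀ p,
      WSet p.unpair.1 ∩ g.codes (Refut U) = ∅ → WSet p.unpair.2 ∩ g.codes (Thms U) = ∅ →
      ∃ n ∈ Θ p, n ∈ g.codes (F U) ∧ n ∉ WSet p.unpair.1 ∪ WSet p.unpair.2 := by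
  obtain ⟨iu, hiu⟩ := hU
  have h1 : Computable fun a : ℕ × ℕ => a.1.unpair.1 :=
    Computable.fst.comp (Computable.unpair.comp Computable.fst)
  have h2 : Computable fun a : ℕ × ℕ => a.1.unpair.2 :=
    Computable.snd.comp (Computable.unpair.comp Computable.fst)
  obtain ⟨ch, hch, hch'⟩ := Partrec.merge'
    ((partrec_W.comp h1 Computable.snd).map (Computable.const true).to₂)
    ((partrec_W.comp h2 Computable.snd).map (Computable.const false).to₂)
  let e : ℕ → ℕ →. ℕ := fun p x =>
    (ch (p, x)).map fun b => cond b x (g.equiv ∼(g.equiv.symm x))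
  have he : Partrec₂ e :=
    hch.map (Computable.cond Computable.snd (Computable.snd.comp Computable.fst)
      (g.neg_comp.comp (Computable.snd.comp Computable.fst))).to₂
  obtain ⟨k, hk, hk'⟩ := param_rec (fun n => eval (ofNat Code iu) n)
    (partrec_W.comp (Computable.const iu) Computable.id) Φ hΦ e he
  refine ⟨fun p => Φ (k p), hΦ.comp hk, ?_⟩
  intro p hA hB
  have hmem : ∀ ψ : L.Sentence, ψ ∈ g.thy (k p) ↔
      ψ ∈ U ∨ ∃ x ∈ Φ (k p), g.equiv ψ ∈ e p x := by
    intro ψ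
    have a1 : ψ ∈ g.thy (k p) ↔ g.equiv ψ ∈ WSet (k p) := by
      simp [Numbering.thy, Equiv.symm_apply_eq]
    have a2 : ψ ∈ U ↔ g.equiv ψ ∈ WSet iu := by
      rw [← hiu]; simp [Numbering.codes]
    rw [a1, a2]
    exact hk' p _
  have hd : ∀ x ∈ Φ (k p), ¬ (ch (p, x)).Dom := by
    intro x hx hdom
    obtain ⟨b, hb⟩ := Part.dom_iff_mem.1 hdom
    have hthy : g.thy (k p) =
        U ∪ {cond b (g.equiv.symm x) (∼(g.equiv.symm x))} := by
      ext ψ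
      rw [hmem, Set.mem_union, Set.mem_singleton_iff]
      refine or_congr Iff.rfl ?_
      constructor
      · rintro ⟨y, hy, hψ⟩
        obtain rfl := Part.mem_unique hx hy
        obtain ⟨b', hb', hψ⟩ := (Part.mem_map_iff _).1 hψ
        obtain rfl := Part.mem_unique hb hb'
        apply g.equiv.injective
        rw [← hψ]
        cases b <;> simp
      · rintro rfl
        refine ⟨x, hx, (Part.mem_map_iff _).2 ⟨b, hb, ?_⟩⟩
        cases b <;> simp
    have hfin : ∃ Γ : Finset L.Sentence, g.thy (k p) = U ∪ (Γ : Set L.Sentence) :=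
      ⟨{cond b (g.equiv.symm x) (∼(g.equiv.symm x))}, by rw [hthy, Finset.coe_singleton]⟩
    have hcons : Consistent (g.thy (k p)) := by
      rw [hthy]
      rcases (hch' (p, x)).1 b hb with h | h
      · obtain ⟨z, hz, rfl⟩ := (Part.mem_map_iff _).1 h
        apply consistent_add
        intro hr
        have : x ∈ WSet p.unpair.1 ∩ g.codes (Refut U) :=
          ⟨Part.dom_iff_mem.2 ⟨z, hz⟩, g.equiv.symm x, hr, by simp⟩
        rw [hA] at this
        exact this
      · obtain ⟨z, hz, rfl⟩ := (Part.mem_map_iff _).1 h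
        apply consistent_add_not
        intro hr
        have : x ∈ WSet p.unpair.2 ∩ g.codes (Thms U) :=
          ⟨Part.dom_iff_mem.2 ⟨z, hz⟩, g.equiv.symm x, hr, by simp⟩
        rw [hB] at this
        exact this
    obtain ⟨n, hn, φ, hφ, -, hind⟩ := hw (k p) hfin hcons
    obtain rfl := Part.mem_unique hx hn
    have hφ' : g.equiv.symm x = φ := by rw [← hφ]; simp [Numbering.code]
    rw [hthy, hφ'] at hind
    cases b
    · exact hind.2 (prv_of_mem (Or.inr rfl))
    · exact hind.1 (prv_of_mem (Or.inr rfl))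
  have hthy : g.thy (k p) = U := by
    ext ψ
    rw [hmem]
    refine or_iff_left ?_
    rintro ⟨x, hx, hψ⟩
    obtain ⟨b, hb, -⟩ := (Part.mem_map_iff _).1 hψ
    exact hd x hx (Part.dom_iff_mem.2 ⟨b, hb⟩)
  obtain ⟨n, hn, φ, hφ, hF, -⟩ := hw (k p) ⟨∅, by simp [hthy]⟩ (by rwa [hthy])
  rw [hthy] at hF
  refine ⟨n, hn, ⟨φ, hF, hφ⟩, ?_⟩
  intro hun
  apply hd n hn
  rw [(hch' (p, n)).2]
  exact hun

/-- **Pour-El's theorem, strengthened.** If the consistent c.e.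
theory `U` is effectively if-essentially `F`-incomplete then `U` is effectively
`F U`-inseparable; moreover the witnessing function can be chosen total. -/
theorem statement8 {L : FirstOrder.Language} (g : Numbering L) (U : L.Theory)
    (hU : g.CEThy U) (hcon : Consistent U)
    (F : Set L.Sentence → Set L.Sentence)
    (h : EffIfEssIncomplete g U F) :
    EffXInseparable g U (F U) ∧
      ∃ Ψ : ℕ → ℕ → ℕ, Computable₂ Ψ ∧ ∀ i j,
        WeaklyBiseparate (WSet i) (WSet j) (g.codes (Thms U)) (g.codes (Refut U)) →
        Ψ i j ∈ g.codes (F U) ∧ Ψ i j ∉ WSet i ∪ WSet j := by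
  obtain ⟨Φ, hΦ, hw⟩ := h
  obtain ⟨Θ, hΘ, hΘ'⟩ := core g U hU hcon F Φ hΦ hw
  obtain ⟨iu, hiu⟩ := hU
  have hUp : g.codes (Thms U) = WSet (g.thmIdx iu) := by
    rw [g.thmIdx_spec, ← hiu]
    simp [Numbering.codes, Set.image_image]
  have hUr : ∀ n, n ∈ g.codes (Refut U) ↔ g.equiv ∼(g.equiv.symm n) ∈ WSet (g.thmIdx iu) := by
    intro n
    rw [← hUp]
    constructor
    · rintro ⟨φ, hφ, rfl⟩
      exact ⟨∼φ, hφ, by simp⟩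
    · rintro ⟨φ, hφ, h⟩
      refine ⟨g.equiv.symm n, ?_, by simp⟩
      rw [g.equiv.injective h] at hφ
      exact hφ
  have h1 : Computable fun a : ℕ × ℕ => a.1.unpair.1 :=
    Computable.fst.comp (Computable.unpair.comp Computable.fst)
  have h2 : Computable fun a : ℕ × ℕ => a.1.unpair.2 :=
    Computable.snd.comp (Computable.unpair.comp Computable.fst)
  have c1 : Partrec fun a : ℕ × ℕ => (eval (ofNat Code a.1.unpair.1) a.2).bind fun _ =>
      eval (ofNat Code (g.thmIdx iu)) (g.equiv ∼(g.equiv.symm a.2)) :=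
    (partrec_W.comp h1 Computable.snd).bind
      (partrec_W.comp (Computable.const (g.thmIdx iu))
        (g.neg_comp.comp (Computable.snd.comp Computable.fst))).to₂
  have c2 : Partrec fun a : ℕ × ℕ => (eval (ofNat Code a.1.unpair.2) a.2).bind fun _ =>
      eval (ofNat Code (g.thmIdx iu)) a.2 :=
    (partrec_W.comp h2 Computable.snd).bind
      (partrec_W.comp (Computable.const (g.thmIdx iu)) (Computable.snd.comp Computable.fst)).to₂
  obtain ⟨r, hr, hr'⟩ := Partrec.merge' c1 c2
  obtain ⟨q, hq, hq'⟩ := partrec_search (fun p n => r (p, n)) hr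
  have hqdom : ∀ p, (q p).Dom ↔ ¬ (WSet p.unpair.1 ∩ g.codes (Refut U) = ∅ ∧
      WSet p.unpair.2 ∩ g.codes (Thms U) = ∅) := by
    intro p
    rw [hq', not_and_or, ← ne_eq, ← ne_eq, ← Set.nonempty_iff_ne_empty,
      ← Set.nonempty_iff_ne_empty, Set.Nonempty, Set.Nonempty, ← exists_or]
    refine exists_congr fun n => ?_
    rw [(hr' _).2, Set.mem_inter_iff, Set.mem_inter_iff, hUr, hUp]
    simp only [WSet, Set.mem_setOf_eq, Part.bind_dom, exists_prop]
  obtain ⟨T, hT, hT'⟩ := Partrec.merge' hΘ hq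
  have hTdom : ∀ p, (T p).Dom := by
    intro p
    rw [(hT' p).2, hqdom]
    by_cases hs : WSet p.unpair.1 ∩ g.codes (Refut U) = ∅ ∧
      WSet p.unpair.2 ∩ g.codes (Thms U) = ∅
    · obtain ⟨n, hn, -⟩ := hΘ' p hs.1 hs.2
      exact Or.inl (Part.dom_iff_mem.2 ⟨n, hn⟩)
    · exact Or.inr hs
  let t : ℕ → ℕ := fun p => (T p).get (hTdom p)
  have ht : Computable t := hT.of_eq fun p => by simp [t]
  have main : ∀ p, WeaklyBiseparate (WSet p.unpair.1) (WSet p.unpair.2)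
      (g.codes (Thms U)) (g.codes (Refut U)) →
      t p ∈ g.codes (F U) ∧ t p ∉ WSet p.unpair.1 ∪ WSet p.unpair.2 := by
    rintro p ⟨-, -, hA, hB⟩
    obtain ⟨n, hn, hn'⟩ := hΘ' p hA hB
    rcases (hT' p).1 (t p) (Part.get_mem _) with h | h
    · rwa [Part.mem_unique h hn]
    · exact absurd ⟨hA, hB⟩ ((hqdom p).1 (Part.dom_iff_mem.2 ⟨_, h⟩))
  have hΨ : Computable₂ fun i j => t (Nat.pair i j) :=
    ht.comp Primrec₂.natPair.to_comp
  have hΨ' : ∀ i j, WeaklyBiseparate (WSet i) (WSet j) (g.codes (Thms U)) (g.codes (Refut U)) →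
      t (Nat.pair i j) ∈ g.codes (F U) ∧ t (Nat.pair i j) ∉ WSet i ∪ WSet j := by
    intro i j hw
    have := main (Nat.pair i j)
    simp only [Nat.unpair_pair] at this
    exact this hw
  exact ⟨⟨fun i j => Part.some (t (Nat.pair i j)), hΨ, fun i j hw =>
    ⟨_, Part.mem_some _, hΨ' i j hw⟩⟩, fun i j => t (Nat.pair i j), hΨ, hΨ'⟩

end PourEl
end

section
/- Let U be a consistent c.e. theory and 𝒳 a c.e. set of sentences. Then U is effectively essentially 𝒳-incomplete if and only if U is effectively essentially [𝒳]_U-incomplete, where [𝒳]_U is the closure of 𝒳 under U-provable equivalence. -/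
open FirstOrder FirstOrder.Language

namespace PourEl

/-! ## Logical notions -/

variable {L : FirstOrder.Language}

/-- `U` is effectively essentially `X`-incomplete: from an index of any consistent
c.e. extension of `U` one can partial-computably find a sentence in `X`
independent of that extension. -/
def EffEssXIncomplete (g : Numbering L) (U : L.Theory) (X : Set L.Sentence) : Prop :=
  ∃ Φ : ℕ →. ℕ, Partrec Φ ∧ ∀ i,
    Thms U ⊆ Thms (g.thy i) → Consistent (g.thy i) →
    ∃ n ∈ Φ i, ∃ φ : L.Sentence, g.code φ = n ∧ φ ∈ X ∧ Independent (g.thy i) φ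

/-- `[X]_U`: the closure of `X` under `U`-provable equivalence. -/
def ProvEquivClosure (U : L.Theory) (X : Set L.Sentence) : Set L.Sentence :=
  {ψ | ∃ φ ∈ X, Prv U (φ ⇔ ψ)}

open Nat.Partrec (Code) in
/-- Computable search for a witness: `m ∈ dom c₁` with `f m n ∈ dom c₂`. -/
theorem exists_search (c₁ c₂ : Code) (f : ℕ → ℕ → ℕ) (hf : Computable₂ f) :
    ∃ S : ℕ →. ℕ, Partrec S ∧ (∀ n m, m ∈ S n → (c₁.eval m).Dom ∧ (c₂.eval (f m n)).Dom) ∧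
      (∀ n, (∃ m, (c₁.eval m).Dom ∧ (c₂.eval (f m n)).Dom) → (S n).Dom) := by
  let h : ℕ → ℕ → Option ℕ := fun n t =>
    (Code.evaln t.unpair.2 c₁ t.unpair.1).bind fun _ =>
      (Code.evaln t.unpair.2 c₂ (f t.unpair.1 n)).map fun _ => t.unpair.1
  have hh : Computable₂ h := by
    have e : Computable fun a : (ℕ × Code) × ℕ => Code.evaln a.1.1 a.1.2 a.2 :=
      Code.primrec_evaln.to_comp
    have u1 : Computable fun p : ℕ × ℕ => p.2.unpair.1 :=
      Computable.fst.comp (Computable.unpair.comp Computable.snd)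
    have u2 : Computable fun p : ℕ × ℕ => p.2.unpair.2 :=
      Computable.snd.comp (Computable.unpair.comp Computable.snd)
    have e1 : Computable fun p : ℕ × ℕ => Code.evaln p.2.unpair.2 c₁ p.2.unpair.1 :=
      e.comp ((u2.pair (Computable.const c₁)).pair u1)
    have e2 : Computable fun p : ℕ × ℕ => Code.evaln p.2.unpair.2 c₂ (f p.2.unpair.1 p.1) :=
      e.comp ((u2.pair (Computable.const c₂)).pair (hf.comp u1 Computable.fst))
    have e3 : Computable fun p : ℕ × ℕ =>
        (Code.evaln p.2.unpair.2 c₂ (f p.2.unpair.1 p.1)).map fun _ => p.2.unpair.1 :=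
      Computable.option_map e2 (u1.comp Computable.fst)
    exact Computable.option_bind e1 (e3.comp Computable.fst)
  refine ⟨fun n => Nat.rfindOpt (h n), Partrec.rfindOpt hh, ?_, ?_⟩
  · intro n m hm
    obtain ⟨t, ht⟩ := Nat.rfindOpt_spec hm
    simp only [h, Option.mem_def, Option.bind_eq_some_iff, Option.map_eq_some_iff] at ht
    obtain ⟨a, ha, b, hb, rfl⟩ := ht
    exact ⟨Part.dom_iff_mem.2 ⟨a, Code.evaln_sound ha⟩, Part.dom_iff_mem.2 ⟨b, Code.evaln_sound hb⟩⟩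
  · rintro n ⟨m, h1, h2⟩
    obtain ⟨a, ha⟩ := Part.dom_iff_mem.1 h1
    obtain ⟨b, hb⟩ := Part.dom_iff_mem.1 h2
    obtain ⟨k, hk⟩ := Code.evaln_complete.1 ha
    obtain ⟨l, hl⟩ := Code.evaln_complete.1 hb
    rw [Nat.rfindOpt_dom]
    refine ⟨Nat.pair m (max k l), m, ?_⟩
    have hk' := Code.evaln_mono (le_max_left k l) hk
    have hl' := Code.evaln_mono (le_max_right k l) hl
    simp only [Option.mem_def] at hk' hl'
    simp [h, hk', hl']

theorem prv_iff_refl {L : FirstOrder.Language} (U : L.Theory) (φ : L.Sentence) :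
    Prv U (φ ⇔ φ) := by
  intro M v xs
  simp

theorem prv_congr {L : FirstOrder.Language} (T : L.Theory) (φ ψ : L.Sentence)
    (h : Prv T (φ ⇔ ψ)) : (Prv T φ ↔ Prv T ψ) ∧ (Prv T ∼φ ↔ Prv T ∼ψ) := by
  have key : ∀ (M : T.ModelType) (v : Empty → M) (xs : Fin 0 → M),
      BoundedFormula.Realize φ v xs ↔ BoundedFormula.Realize ψ v xs := fun M v xs => by
    have := h M v xs
    simpa using this
  constructor
  · exact forall_congr' fun M => forall_congr' fun v => forall_congr' fun xs => key M v xs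
  · refine forall_congr' fun M => forall_congr' fun v => forall_congr' fun xs => ?_
    have := key M v xs
    simpa using not_congr this

/-- For a consistent c.e. theory `U` and a c.e. set `X` of
sentences: `U` is effectively essentially `X`-incomplete iff `U` is effectively
essentially `[X]_U`-incomplete. -/
theorem statement10 {L : FirstOrder.Language} (g : Numbering L) (U : L.Theory)
    (hU : g.CEThy U) (hcon : Consistent U)
    (X : Set L.Sentence) (hX : CE (g.codes X)) :
    EffEssXIncomplete g U X ↔ EffEssXIncomplete g U (ProvEquivClosure U X) := by
  constructor
  · rintro ⟨Φ, hΦ, H⟩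
    refine ⟨Φ, hΦ, fun i h1 h2 => ?_⟩
    obtain ⟨n, hn, φ, hc, hφ, hi⟩ := H i h1 h2
    exact ⟨n, hn, φ, hc, ⟨φ, hφ, prv_iff_refl U φ⟩, hi⟩
  · rintro ⟨Φ, hΦ, H⟩
    obtain ⟨u, hu⟩ := hU
    obtain ⟨x, hx⟩ := hX
    have hUeq : g.equiv.symm '' WSet u = U := by
      rw [← hu]; simp [Numbering.codes, Set.image_image]
    have hthm : ∀ φ, g.equiv φ ∈ WSet (g.thmIdx u) ↔ Prv U φ := fun φ => by
      rw [g.thmIdx_spec, hUeq, g.equiv.injective.mem_set_image]; rfl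
    have hXm : ∀ φ, g.equiv φ ∈ WSet x ↔ φ ∈ X := fun φ => by
      rw [← hx]; exact g.equiv.injective.mem_set_image
    obtain ⟨S, hS, hs, hd⟩ := exists_search (Denumerable.ofNat Nat.Partrec.Code x)
      (Denumerable.ofNat Nat.Partrec.Code (g.thmIdx u)) _ g.iff_comp
    refine ⟨fun i => (Φ i).bind S, hΦ.bind (hS.comp Computable.snd), fun i h1 h2 => ?_⟩
    obtain ⟨n, hn, ψ, hc, ⟨φ, hφ, hp⟩, hi⟩ := H i h1 h2
    change g.equiv ψ = n at hc
    have hdom : (S n).Dom := hd n ⟨g.equiv φ, (hXm φ).2 hφ, by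
      subst hc
      simp only [Equiv.symm_apply_apply]
      exact (hthm _).2 hp⟩
    obtain ⟨m, hm⟩ := Part.dom_iff_mem.1 hdom
    obtain ⟨hm1, hm2⟩ := hs n m hm
    have hm2' : Prv U (g.equiv.symm m ⇔ ψ) := by
      have := (hthm _).1 hm2
      subst hc
      simpa using this
    have hcong := prv_congr (g.thy i) _ _ (h1 hm2')
    refine ⟨m, Part.mem_bind hn hm, g.equiv.symm m, by simp [Numbering.code],
      (hXm _).1 (by rw [Equiv.apply_symm_apply]; exact hm1), ?_⟩
    exact ⟨fun h => hi.1 (hcong.1.1 h), fun h => hi.2 (hcong.2.1 h)⟩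

end PourEl
end

section
/- Let U be a consistent c.e. theory and 𝒳 a set of sentences. Then U is strongly effectively 𝒳-inseparable if and only if U is effectively essentially hereditarily 𝒳-creative. -/
open FirstOrder FirstOrder.Language

namespace PourEl

/-! ## Logical notions -/

variable {L : FirstOrder.Language}

/-- `U` is effectively essentially hereditarily `X`-creative. -/
def EffEssHerXCreative (g : Numbering L) (U : L.Theory) (X : Set L.Sentence) : Prop :=
  ∃ Φ : ℕ × ℕ × ℕ →. ℕ, Partrec Φ ∧ ∀ i j k,
    Thms U ⊆ Thms (g.thy k) → Consistent (g.thy k) →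
    Thms (g.thy i) ⊆ Thms (g.thy k) →
    g.codes (Thms (g.thy i)) ∩ WSet j = ∅ →
    ∃ n ∈ Φ (i, j, k), n ∈ g.codes X ∧ n ∉ g.codes (Thms (g.thy i)) ∪ WSet j

/-- `U` is strongly effectively `X`-inseparable: effective inseparability of the
pair consisting of the theorems of pure predicate logic (`0_{U,p}`) and the
refutable sentences of `U`. -/
def StrongEffXInseparable (g : Numbering L) (U : L.Theory) (X : Set L.Sentence) : Prop :=
  ∃ Φ : ℕ → ℕ →. ℕ, Partrec₂ Φ ∧ ∀ i j,
    WeaklyBiseparate (WSet i) (WSet j)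
      (g.codes (Thms (∅ : L.Theory))) (g.codes (Refut U)) →
    ∃ n ∈ Φ i j, n ∈ g.codes X ∧ n ∉ WSet i ∪ WSet j

/-! ## Helper lemmas -/

universe u v

theorem prv_iff {L : FirstOrder.Language.{u, v}} (T : L.Theory) (φ : L.Sentence) :
    Prv T φ ↔ ∀ M : Theory.ModelType.{u, v, max u v} T, M ⊨ φ :=
  Theory.models_sentence_iff

theorem prv_mem {L : FirstOrder.Language} {T : L.Theory} {φ : L.Sentence} (h : φ ∈ T) :
    Prv T φ := by
  rw [prv_iff]
  intro M
  exact Theory.realize_sentence_of_mem T h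

theorem prv_cut {L : FirstOrder.Language} {S T : L.Theory} {φ : L.Sentence}
    (hST : ∀ ψ ∈ S, Prv T ψ) (h : Prv S φ) : Prv T φ := by
  rw [prv_iff] at h ⊢
  intro M
  have : M ⊨ S := ⟨fun ψ hψ => (prv_iff T ψ).1 (hST ψ hψ) M⟩
  exact h (Theory.ModelType.of S M)

theorem prv_mono {L : FirstOrder.Language} {S T : L.Theory} {φ : L.Sentence}
    (hST : S ⊆ T) (h : Prv S φ) : Prv T φ :=
  prv_cut (fun _ hψ => prv_mem (hST hψ)) h

theorem not_both {L : FirstOrder.Language} {T : L.Theory} {φ : L.Sentence}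
    (hc : Consistent T) (h : Prv T φ) (h2 : Prv T ∼φ) : False := by
  apply hc
  rw [prv_iff] at *
  intro M
  have h3 := h2 M
  rw [Sentence.realize_not] at h3
  exact absurd (h M) h3

theorem consistent_insert {L : FirstOrder.Language} {T : L.Theory} {φ : L.Sentence}
    (h : ¬ Prv T ∼φ) : Consistent (T ∪ {φ}) := by
  intro hb
  apply h
  rw [prv_iff] at *
  intro M
  rw [Sentence.realize_not]
  intro hφ
  have : M ⊨ (T ∪ {φ} : L.Theory) := by
    refine ⟨fun ψ hψ => ?_⟩
    rcases hψ with hψ | hψ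
    · exact Theory.realize_sentence_of_mem T hψ
    · rw [Set.mem_singleton_iff.1 hψ]; exact hφ
  exact hb (Theory.ModelType.of _ M)

open Nat.Partrec in
theorem smn (f : ℕ → ℕ →. ℕ) (hf : Partrec₂ f) :
    ∃ s : ℕ → ℕ, Computable s ∧ ∀ a, WSet (s a) = {x | (f a x).Dom} := by
  have h1 : Partrec (fun p : ℕ => f p.unpair.1 p.unpair.2) :=
    Partrec.comp (f := fun q : ℕ × ℕ => f q.1 q.2) hf Computable.unpair
  obtain ⟨c, hc⟩ := Code.exists_code.1 (Partrec.nat_iff.1 h1)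
  refine ⟨fun a => Encodable.encode (Code.curry c a),
    Computable.encode.comp (Code.primrec₂_curry.to_comp.comp (Computable.const c) Computable.id),
    fun a => ?_⟩
  ext x
  simp [WSet, Denumerable.ofNat_encode, Code.eval_curry, hc]

open Nat.Partrec in
theorem evalW_partrec : Partrec₂ (fun i n : ℕ => (Denumerable.ofNat Code i).eval n) :=
  Code.eval_part.comp ((Computable.ofNat Code).comp Computable.fst) Computable.snd

theorem union_index (u : ℕ) :
    ∃ h : ℕ → ℕ, Computable h ∧ ∀ e, WSet (h e) = WSet e ∪ WSet u := by
  obtain ⟨k, hk, hk2⟩ := Partrec.merge'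
    (f := fun p : ℕ × ℕ => (Denumerable.ofNat Nat.Partrec.Code p.1).eval p.2)
    (g := fun p : ℕ × ℕ => (Denumerable.ofNat Nat.Partrec.Code u).eval p.2)
    evalW_partrec
    (evalW_partrec.comp (Computable.const u) Computable.snd)
  obtain ⟨s, hs, hs2⟩ := smn (fun e x => k (e, x)) hk
  refine ⟨s, hs, fun e => ?_⟩
  rw [hs2]
  ext x
  exact (hk2 (e, x)).2

theorem preimage_index (u : ℕ) (t : ℕ → ℕ) (ht : Computable t) :
    ∃ r, WSet r = {x | t x ∈ WSet u} := by
  obtain ⟨s, hs, hs2⟩ := smn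
    (fun _ x => (Denumerable.ofNat Nat.Partrec.Code u).eval (t x))
    (evalW_partrec.comp (Computable.const u) (ht.comp Computable.snd))
  exact ⟨s 0, hs2 0⟩

/-- Dovetailing: decide which of `W_i`, `W_j` a number enters first. -/
theorem race : ∃ d : (ℕ × ℕ) × ℕ →. Bool, Partrec d ∧ ∀ i j n,
    (true ∈ d ((i, j), n) → n ∈ WSet i) ∧ (false ∈ d ((i, j), n) → n ∈ WSet j) ∧
    (n ∈ WSet i ∪ WSet j → (d ((i, j), n)).Dom) := by
  obtain ⟨d, hd, hd2⟩ := Partrec.merge'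
    (f := fun p : (ℕ × ℕ) × ℕ =>
      ((Denumerable.ofNat Nat.Partrec.Code p.1.1).eval p.2).map (fun _ => true))
    (g := fun p : (ℕ × ℕ) × ℕ =>
      ((Denumerable.ofNat Nat.Partrec.Code p.1.2).eval p.2).map (fun _ => false))
    ((evalW_partrec.comp (Computable.fst.comp Computable.fst) Computable.snd).map
      (Computable.const true).to₂)
    ((evalW_partrec.comp (Computable.snd.comp Computable.fst) Computable.snd).map
      (Computable.const false).to₂)
  refine ⟨d, hd, fun i j n => ⟨fun h => ?_, fun h => ?_, fun h => ?_⟩⟩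
  · rcases (hd2 ((i, j), n)).1 _ h with h | h
    · obtain ⟨y, hy, -⟩ := (Part.mem_map_iff _).1 h
      exact Part.dom_iff_mem.2 ⟨y, hy⟩
    · obtain ⟨y, hy, h3⟩ := (Part.mem_map_iff _).1 h
      cases h3
  · rcases (hd2 ((i, j), n)).1 _ h with h | h
    · obtain ⟨y, hy, h3⟩ := (Part.mem_map_iff _).1 h
      cases h3
    · obtain ⟨y, hy, -⟩ := (Part.mem_map_iff _).1 h
      exact Part.dom_iff_mem.2 ⟨y, hy⟩
  · exact (hd2 ((i, j), n)).2.2 h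

theorem test_comp : Computable (fun r : (ℕ × ℕ) × (Bool × Bool) =>
    (decide (r.1.1 = r.1.2) && (r.2.1 == r.2.2))) := by
  have h1 : Primrec (fun r : (ℕ × ℕ) × (Bool × Bool) => decide (r.1.1 = r.1.2)) :=
    PrimrecRel.decide (Primrec.eq (α := ℕ)) |>.comp (Primrec.fst.comp Primrec.fst)
      (Primrec.snd.comp Primrec.fst)
  have h2 : Primrec (fun r : (ℕ × ℕ) × (Bool × Bool) => (r.2.1 == r.2.2)) :=
    Primrec.beq.comp (Primrec.fst.comp Primrec.snd) (Primrec.snd.comp Primrec.snd)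
  exact (Primrec.and.comp h1 h2).to_comp

open Nat.Partrec in
theorem diag (F : ℕ × ℕ →. ℕ) (hF : Partrec F) :
    ∃ a b : ℕ × ℕ → ℕ, Computable a ∧ Computable b ∧ ∀ i j,
      (∀ n ∈ F (a (i, j), b (i, j)),
        (n ∈ WSet i ∧ WSet (a (i, j)) = {n} ∧ WSet (b (i, j)) = ∅) ∨
        (n ∈ WSet j ∧ WSet (a (i, j)) = ∅ ∧ WSet (b (i, j)) = {n}) ∨
        (n ∉ WSet i ∪ WSet j ∧ WSet (a (i, j)) = ∅ ∧ WSet (b (i, j)) = ∅)) ∧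
      (¬ (F (a (i, j), b (i, j))).Dom → WSet (a (i, j)) = ∅ ∧ WSet (b (i, j)) = ∅) := by
  obtain ⟨d, hd, hd2⟩ := race
  obtain ⟨A, hAd, hA⟩ : ∃ A : Code → Bool → ℕ × ℕ → ℕ,
      (∀ c t p, A c t p = Encodable.encode (Code.curry c (Encodable.encode (t, p)))) ∧
      Computable (fun q : Code × Bool × (ℕ × ℕ) => A q.1 q.2.1 q.2.2) :=
    ⟨fun c t p => Encodable.encode (Code.curry c (Encodable.encode (t, p))), fun _ _ _ => rfl,
      Computable.encode.comp (Code.primrec₂_curry.to_comp.comp Computable.fst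
        (Computable.encode.comp Computable.snd))⟩
  -- the body of the self-referential program
  let G : Code → Bool × (ℕ × ℕ) → ℕ →. ℕ := fun c q x =>
    (F (A c true q.2, A c false q.2)).bind fun n =>
      (d (q.2, n)).bind fun b =>
        (cond (decide (n = x) && (b == q.1)) (Part.some 0) Part.none)
  have hG : Partrec (fun r : Code × (Bool × (ℕ × ℕ)) × ℕ => G r.1 r.2.1 r.2.2) := by
    have e1 : ∀ t : Bool, Computable
        (fun r : Code × (Bool × (ℕ × ℕ)) × ℕ => A r.1 t r.2.1.2) := fun t =>
      hA.comp (f := fun q : Code × Bool × (ℕ × ℕ) => A q.1 q.2.1 q.2.2)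
        (g := fun r : Code × (Bool × (ℕ × ℕ)) × ℕ => (r.1, t, r.2.1.2))
        (Computable.pair Computable.fst (Computable.pair (Computable.const t)
          (Computable.snd.comp (Computable.fst.comp Computable.snd))))
    have e2 : Partrec (fun r : Code × (Bool × (ℕ × ℕ)) × ℕ =>
        F (A r.1 true r.2.1.2, A r.1 false r.2.1.2)) :=
      hF.comp (Computable.pair (e1 true) (e1 false))
    have e3 : Partrec (fun r : (Code × (Bool × (ℕ × ℕ)) × ℕ) × ℕ => d (r.1.2.1.2, r.2)) :=
      hd.comp (Computable.pair
        (Computable.snd.comp (Computable.fst.comp (Computable.snd.comp Computable.fst)))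
        Computable.snd)
    have e4 : Computable (fun r : ((Code × (Bool × (ℕ × ℕ)) × ℕ) × ℕ) × Bool =>
        (decide (r.1.2 = r.1.1.2.2) && (r.2 == r.1.1.2.1.1))) :=
      test_comp.comp
        (g := fun r : ((Code × (Bool × (ℕ × ℕ)) × ℕ) × ℕ) × Bool =>
          ((r.1.2, r.1.1.2.2), (r.2, r.1.1.2.1.1)))
        (Computable.pair (Computable.pair (Computable.snd.comp Computable.fst)
        (Computable.snd.comp (Computable.snd.comp (Computable.fst.comp Computable.fst))))
      (Computable.pair Computable.snd
        (Computable.fst.comp (Computable.fst.comp (Computable.snd.comp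
          (Computable.fst.comp Computable.fst))))))
    have e5 : Partrec (fun r : ((Code × (Bool × (ℕ × ℕ)) × ℕ) × ℕ) × Bool =>
        (cond (decide (r.1.2 = r.1.1.2.2) && (r.2 == r.1.1.2.1.1))
          (Part.some 0) Part.none : Part ℕ)) :=
      Partrec.cond e4 (Computable.const 0).partrec Partrec.none
    have e6 : Partrec (fun r : (Code × (Bool × (ℕ × ℕ)) × ℕ) × ℕ =>
        (d (r.1.2.1.2, r.2)).bind fun b =>
          (cond (decide (r.2 = r.1.2.2) && (b == r.1.2.1.1)) (Part.some 0) Part.none : Part ℕ)) :=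
      Partrec.bind e3 (g := fun (r : (Code × (Bool × (ℕ × ℕ)) × ℕ) × ℕ) b =>
          (cond (decide (r.2 = r.1.2.2) && (b == r.1.2.1.1)) (Part.some 0) Part.none : Part ℕ)) e5
    exact Partrec.bind e2 (g := fun (r : Code × (Bool × (ℕ × ℕ)) × ℕ) n =>
        (d (r.2.1.2, n)).bind fun b =>
          (cond (decide (n = r.2.2) && (b == r.2.1.1)) (Part.some 0) Part.none : Part ℕ)) e6
  let f : Code → ℕ →. ℕ := fun c y =>
    (Part.ofOption (Encodable.decode (α := Bool × (ℕ × ℕ)) y.unpair.1)).bind fun q =>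
      G c q y.unpair.2
  have hf : Partrec₂ f := by
    refine Partrec.bind (Computable.ofOption (Computable.decode.comp
      (Computable.fst.comp (Computable.unpair.comp Computable.snd)))) ?_
    exact hG.comp (Computable.pair (Computable.fst.comp Computable.fst)
      (Computable.pair Computable.snd
        (Computable.snd.comp (Computable.unpair.comp (Computable.snd.comp Computable.fst)))))
  obtain ⟨c, hc⟩ := Code.fixed_point₂ hf
  have hW : ∀ t p, WSet (A c t p) = {x | (G c (t, p) x).Dom} := by
    intro t p
    ext x
    simp only [WSet, hAd, Denumerable.ofNat_encode, Code.eval_curry, hc, f, Nat.unpair_pair,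
      Encodable.encodek, Set.mem_ofPred_eq, Part.coe_some, Part.bind_some, Part.ofOption]
  have hG2 : ∀ t p x, (G c (t, p) x).Dom ↔
      x ∈ F (A c true p, A c false p) ∧ t ∈ d (p, x) := by
    intro t p x
    rw [Part.dom_iff_mem]
    constructor
    · rintro ⟨y, hy⟩
      obtain ⟨n, hn, hy⟩ := Part.mem_bind_iff.1 hy
      obtain ⟨b, hb, hy⟩ := Part.mem_bind_iff.1 hy
      by_cases h1 : n = x
      · by_cases h2 : b = t
        · subst h1 h2; exact ⟨hn, hb⟩
        · have h3 : (b == t) = false := beq_eq_false_iff_ne.2 h2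
          change y ∈ (cond (decide (n = x) && (b == t)) (Part.some 0) Part.none : Part ℕ) at hy
          rw [h3, Bool.and_false] at hy
          exact absurd hy (Part.notMem_none y)
      · simp [h1] at hy
    · rintro ⟨h1, h2⟩
      refine ⟨0, Part.mem_bind_iff.2 ⟨x, h1, Part.mem_bind_iff.2 ⟨t, h2, ?_⟩⟩⟩
      simp
  refine ⟨A c true, A c false,
    hA.comp (Computable.pair (Computable.const c)
      (Computable.pair (Computable.const true) Computable.id)),
    hA.comp (Computable.pair (Computable.const c)
      (Computable.pair (Computable.const false) Computable.id)), fun i j => ⟨?_, ?_⟩⟩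
  · intro n hn
    have key : ∀ t x, x ∈ WSet (A c t (i, j)) ↔ x = n ∧ t ∈ d ((i, j), n) := by
      intro t x
      rw [hW, Set.mem_ofPred_eq, hG2]
      constructor
      · rintro ⟨h1, h2⟩
        have := Part.mem_unique h1 hn
        subst this
        exact ⟨rfl, h2⟩
      · rintro ⟨rfl, h2⟩
        exact ⟨hn, h2⟩
    obtain ⟨d1, d2, d3⟩ := hd2 i j n
    by_cases h : (d ((i, j), n)).Dom
    · obtain ⟨b, hb⟩ := Part.dom_iff_mem.1 h
      cases b
      · have ht : true ∉ d ((i, j), n) := fun h' => Bool.noConfusion (Part.mem_unique h' hb)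
        refine Or.inr (Or.inl ⟨d2 hb, ?_, ?_⟩)
        · ext x; rw [key]; simp [ht]
        · ext x; rw [key]; simp [hb]
      · have ht : false ∉ d ((i, j), n) := fun h' => Bool.noConfusion (Part.mem_unique h' hb)
        refine Or.inl ⟨d1 hb, ?_, ?_⟩
        · ext x; rw [key]; simp [hb]
        · ext x; rw [key]; simp [ht]
    · have ht : ∀ t, t ∉ d ((i, j), n) := fun t h' => h (Part.dom_iff_mem.2 ⟨t, h'⟩)
      refine Or.inr (Or.inr ⟨fun h' => h (d3 h'), ?_, ?_⟩)
      · ext x; rw [key]; simp [ht]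
      · ext x; rw [key]; simp [ht]
  · intro h
    have key : ∀ t, WSet (A c t (i, j)) = ∅ := by
      intro t
      ext x
      rw [hW, Set.mem_ofPred_eq, hG2]
      exact iff_of_false (fun h' => h (Part.dom_iff_mem.2 ⟨x, h'.1⟩)) (Set.notMem_empty x)
    exact ⟨key _, key _⟩

/-- A consistent c.e. theory `U` is strongly effectively
`X`-inseparable iff it is effectively essentially hereditarily `X`-creative. -/
theorem statement16 {L : FirstOrder.Language} (g : Numbering L) (U : L.Theory)
    (hU : g.CEThy U) (hcon : Consistent U) (X : Set L.Sentence) :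
    StrongEffXInseparable g U X ↔ EffEssHerXCreative g U X := by
  obtain ⟨u, hu⟩ := hU
  have thyU : g.thy u = U := by
    unfold Numbering.thy
    rw [← hu]
    simp [Numbering.codes, Set.image_image]
  constructor
  · rintro ⟨Φ, hΦ, hspec⟩
    obtain ⟨r, hr⟩ := preimage_index (g.thmIdx u) _ g.neg_comp
    have hr2 : WSet r = g.codes (Refut U) := by
      rw [hr, g.thmIdx_spec u]
      change {x | _ ∈ g.equiv '' Thms (g.thy u)} = _
      rw [thyU]
      ext x
      obtain ⟨φ, rfl⟩ := g.equiv.surjective x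
      simp [Numbering.codes, Refut, Thms]
    obtain ⟨h, hh, hh2⟩ := union_index r
    refine ⟨fun q => Φ (g.thmIdx q.1) (h q.2.1),
      hΦ.comp (g.thmIdx_comp.comp Computable.fst)
        (hh.comp (Computable.fst.comp Computable.snd)), fun i j k hUk hk hik hij => ?_⟩
    have hi : WSet (g.thmIdx i) = g.codes (Thms (g.thy i)) := g.thmIdx_spec i
    have h0 : Thms (∅ : L.Theory) ⊆ Thms (g.thy i) :=
      fun φ hφ => prv_mono (Set.empty_subset _) hφ
    have h0U : Thms (∅ : L.Theory) ⊆ Thms U :=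
      fun φ hφ => prv_mono (Set.empty_subset _) hφ
    obtain ⟨n, hn, hnX, hn2⟩ := hspec (g.thmIdx i) (h j) (by
      rw [hi, hh2, hr2]
      refine ⟨Set.image_mono h0, Set.subset_union_right, ?_, ?_⟩
      · rw [Set.eq_empty_iff_forall_notMem]
        rintro x ⟨⟨φ, hφ, rfl⟩, ⟨ψ, hψ, he⟩⟩
        rw [g.equiv.injective he] at hψ
        exact not_both hk (hik hφ) (hUk hψ)
      · rw [Set.eq_empty_iff_forall_notMem]
        rintro x ⟨hx, ⟨φ, hφ, rfl⟩⟩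
        rcases hx with hx | ⟨ψ, hψ, he⟩
        · exact Set.eq_empty_iff_forall_notMem.1 hij _ ⟨⟨φ, h0 hφ, rfl⟩, hx⟩
        · rw [g.equiv.injective he] at hψ
          exact not_both hcon (h0U hφ) hψ)
    refine ⟨n, hn, hnX, ?_⟩
    rw [hi, hh2] at hn2
    rintro (h' | h')
    · exact hn2 (Or.inl h')
    · exact hn2 (Or.inr (Or.inl h'))
  · rintro ⟨Φ, hΦ, hspec⟩
    obtain ⟨h, hh, hh2⟩ := union_index u
    obtain ⟨a, b, ha, hb, hab⟩ := diag (fun p => Φ (p.1, p.2, h p.1))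
      (hΦ.comp (Computable.pair Computable.fst
        (Computable.pair Computable.snd (hh.comp Computable.fst))))
    have thyh : ∀ e, g.thy (h e) = g.thy e ∪ U := by
      intro e
      rw [← thyU]
      unfold Numbering.thy
      rw [hh2, Set.image_union]
    refine ⟨fun i j => Φ (a (i, j), b (i, j), h (a (i, j))),
      hΦ.comp (Computable.pair ha (Computable.pair hb (hh.comp ha))), fun i j hW => ?_⟩
    obtain ⟨-, -, hZ, hV⟩ := hW
    have main := hspec (a (i, j)) (b (i, j)) (h (a (i, j)))
      (fun φ hφ => by rw [thyh]; exact prv_mono Set.subset_union_right hφ)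
    have main2 := fun hc => main hc
      (fun φ hφ => by rw [thyh]; exact prv_mono Set.subset_union_left hφ)
    obtain ⟨hab1, hab2⟩ := hab i j
    have emp : ∀ e, WSet e = ∅ → g.thy e = ∅ := by
      intro e he
      unfold Numbering.thy
      rw [he, Set.image_empty]
    have good : Consistent (g.thy (h (a (i, j)))) ∧
        g.codes (Thms (g.thy (a (i, j)))) ∩ WSet (b (i, j)) = ∅ := by
      rw [thyh]
      by_cases hd : (Φ (a (i, j), b (i, j), h (a (i, j)))).Dom
      · obtain ⟨n, hn⟩ := Part.dom_iff_mem.1 hd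
        rcases hab1 n hn with ⟨h1, h2, h3⟩ | ⟨h1, h2, h3⟩ | ⟨h1, h2, h3⟩
        · rw [h3, Set.inter_empty]
          refine ⟨?_, rfl⟩
          have : g.thy (a (i, j)) = {g.equiv.symm n} := by
            unfold Numbering.thy
            rw [h2, Set.image_singleton]
          rw [this, Set.union_comm]
          refine consistent_insert fun hp => ?_
          exact Set.eq_empty_iff_forall_notMem.1 hZ n
            ⟨h1, ⟨g.equiv.symm n, hp, g.equiv.apply_symm_apply n⟩⟩
        · rw [emp _ h2, h3, Set.empty_union]
          refine ⟨hcon, ?_⟩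
          rw [Set.eq_empty_iff_forall_notMem]
          rintro x ⟨hx, hx2⟩
          rw [Set.mem_singleton_iff.1 hx2] at hx
          exact Set.eq_empty_iff_forall_notMem.1 hV n ⟨h1, hx⟩
        · rw [emp _ h2, h3, Set.empty_union, Set.inter_empty]
          exact ⟨hcon, rfl⟩
      · obtain ⟨h2, h3⟩ := hab2 hd
        rw [emp _ h2, h3, Set.empty_union, Set.inter_empty]
        exact ⟨hcon, rfl⟩
    obtain ⟨n, hn, hnX, hn2⟩ := main2 good.1 good.2
    refine ⟨n, hn, hnX, ?_⟩
    rcases hab1 n hn with ⟨h1, h2, h3⟩ | ⟨h1, h2, h3⟩ | ⟨h1, h2, h3⟩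
    · refine absurd (Or.inl ⟨g.equiv.symm n, prv_mem ⟨n, ?_, rfl⟩, g.equiv.apply_symm_apply n⟩) hn2
      rw [h2]; rfl
    · refine absurd (Or.inr ?_) hn2
      rw [h3]; rfl
    · exact h1

end PourEl
end
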